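/- Let b > 0, let q : ℝ → ℂ be continuous on [−b,b], let f solve f'' − q f = 0 on [−b,b] with f(0) = 1, f'(0) = 0, and assume f(x) ≠ 0 on [−b,b]. For ω ∈ ℂ let u(ω,·) be the solution of y'' − q(x)y = −ω² y with y(0) = 1, y'(0) = iω, and define u_N(ω,x) = e^{iωx} + √π e^{−ω²/4} Σ_{n=0}^{N} c_n(x)(iω)ⁿ. Then there exist functions ε_N : [−b,b] → [0,∞) with ε_N(x) → 0 as N → ∞ for every x ∈ [−b,b], such that for all ω ∈ ℂ, all N ∈ ℕ and all x ∈ [−b,b], |u(ω,x) − u_N(ω,x)| ≤ π^{1/4} · e^{(Im ω)²/2} · ε_N(x); in particular the truncation error is uniformly bounded in every strip |Im ω| ≤ C. -/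

import Mathlib

open MeasureTheory Set Filter Finset Complex Topology

noncomputable section

/-- The iterated integrals X⁽ⁿ⁾: X⁽⁰⁾ ≡ 1, X⁽ⁿ⁾(x) = n ∫₀ˣ X⁽ⁿ⁻¹⁾(s) (f(s)²)^((−1)ⁿ) ds. -/
def formalX (f : ℝ → ℂ) : ℕ → ℝ → ℂ
  | 0 => fun _ => 1
  | n + 1 => fun x =>
      (n + 1 : ℂ) * ∫ s in (0:ℝ)..x, formalX f n s * ((f s) ^ 2) ^ ((-1 : ℤ) ^ (n + 1))

/-- The iterated integrals X̃⁽ⁿ⁾: X̃⁽⁰⁾ ≡ 1, X̃⁽ⁿ⁾(x) = n ∫₀ˣ X̃⁽ⁿ⁻¹⁾(s) (f(s)²)^((−1)^(n−1)) ds. -/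
def formalXt (f : ℝ → ℂ) : ℕ → ℝ → ℂ
  | 0 => fun _ => 1
  | n + 1 => fun x =>
      (n + 1 : ℂ) * ∫ s in (0:ℝ)..x, formalXt f n s * ((f s) ^ 2) ^ ((-1 : ℤ) ^ n)

/-- The formal powers φₖ: φₖ = f·X⁽ᵏ⁾ for odd k, φₖ = f·X̃⁽ᵏ⁾ for even k. -/
def formalPower (f : ℝ → ℂ) (k : ℕ) (x : ℝ) : ℂ :=
  if Odd k then f x * formalX f k x else f x * formalXt f k x

/-- The physicists' Hermite polynomials: H₀ = 1, Hₙ₊₁ = 2x·Hₙ − Hₙ'. -/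
def hermitePhys : ℕ → Polynomial ℝ
  | 0 => 1
  | n + 1 => 2 * Polynomial.X * hermitePhys n - Polynomial.derivative (hermitePhys n)

/-- cₙ(x) = (1/(√π n! 2ⁿ)) Σₖ h_{k,n} (φₖ(x) − xᵏ), h_{k,n} the coefficient of yᵏ in Hₙ. -/
def cCoef (f : ℝ → ℂ) (n : ℕ) (x : ℝ) : ℂ :=
  (1 / ((Real.sqrt Real.pi : ℂ) * n.factorial * 2 ^ n)) *
    ∑ k ∈ Finset.range (n + 1), ((hermitePhys n).coeff k : ℂ) * (formalPower f k x - (x : ℂ) ^ k)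

/-!
For fixed `x`, put `D w = y x - exp (I * w * x)`. By Pólya factorization the power series of
`y x` in `s = I * w` has coefficients `φₖ(x) / k!`, so that of `D` has coefficients
`(φₖ(x) - xᵏ) / k!`; multiplying by `exp (-s² / 4)`, the exponential generating function of
`Hₘ(0) / 2ᵐ`, turns them into `√π cₙ(x)`, because the coefficient of `yᵏ` in `Hₘ₊ₖ` is
`2ᵏ (m + k choose k) Hₘ(0)`. Hence `G w = D w * exp (w² / 4)` is the entire function
`∑ √π cₙ(x) (I * w)ⁿ`.

Variation of constants gives `D w = O(exp (|Im w| |x|) / |w|)`. As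
`|G w|² exp (-|w|² / 2) = |D w|² exp (-(Im w)²)`, this is just enough decay along the real axis for
`G` to lie in the Bargmann–Fock space of the weight `exp (-|w|² / 2)`. There the monomials are
orthogonal with `‖wⁿ‖² = 2π 2ⁿ n!`, so `∑ 2ⁿ n! |cₙ(x)|² < ∞`, and by Cauchy–Schwarz the tail of the
series for `G` is at most `exp (|w|² / 4)` times the square root of the tail of this sum. The factor
`exp (-w² / 4)` turns `exp (|w|² / 4)` into `exp ((Im w)² / 2)`.
-/

section Hermite

theorem derivative_hermitePhys_succ (n : ℕ) :
    (hermitePhys (n + 1)).derivative = (2 * (n + 1) : ℝ) • hermitePhys n := by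
  induction n with
  | zero => simp [hermitePhys, Polynomial.smul_eq_C_mul, map_ofNat]
  | succ n ih =>
    have rec_succ : hermitePhys (n + 2) =
        2 * Polynomial.X * hermitePhys (n + 1) - (2 * (n + 1) : ℝ) • hermitePhys n := by
      rw [← ih, hermitePhys]
    have rec_n : hermitePhys (n + 1) =
        2 * Polynomial.X * hermitePhys n - (hermitePhys n).derivative := rfl
    rw [rec_succ, Polynomial.derivative_sub, Polynomial.derivative_mul, ih,
      Polynomial.derivative_smul]
    simp only [Polynomial.derivative_mul, Polynomial.derivative_ofNat, Polynomial.derivative_X,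
      Polynomial.smul_eq_C_mul, rec_n]
    push_cast
    simp only [map_mul, map_add, map_ofNat, map_natCast, map_one]
    ring

theorem coeff_hermitePhys_add (m k : ℕ) :
    (hermitePhys (m + k)).coeff k = 2 ^ k * (m + k).choose k * (hermitePhys m).coeff 0 := by
  induction k with
  | zero => simp
  | succ k ih =>
    have h := congrArg (Polynomial.coeff · k) (derivative_hermitePhys_succ (m + k))
    simp only [Polynomial.coeff_derivative, Polynomial.coeff_smul, smul_eq_mul, ih] at h
    have hchoose : ((m + k + 1).choose (k + 1) * (k + 1) : ℝ) = (m + k + 1) * (m + k).choose k := by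
      exact_mod_cast (Nat.add_one_mul_choose_eq (m + k) k).symm
    rw [← add_assoc]
    apply mul_right_cancel₀ (Nat.cast_add_one_ne_zero k : (k + 1 : ℝ) ≠ 0)
    rw [h]
    push_cast
    linear_combination (-2 * 2 ^ k * (hermitePhys m).coeff 0) * hchoose

theorem coeff_zero_hermitePhys_add_two (n : ℕ) :
    (hermitePhys (n + 2)).coeff 0 = -(2 * (n + 1)) * (hermitePhys n).coeff 0 := by
  rw [hermitePhys, derivative_hermitePhys_succ]
  simp [mul_assoc]

theorem coeff_zero_hermitePhys_two_mul (j : ℕ) :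
    (hermitePhys (2 * j)).coeff 0 = (-1) ^ j * (2 * j).factorial / j.factorial := by
  induction j with
  | zero => simp [hermitePhys]
  | succ j ih =>
    rw [mul_add_one, coeff_zero_hermitePhys_add_two, ih, Nat.factorial_succ, Nat.factorial_succ,
      Nat.factorial_succ]
    have := j.factorial_pos
    push_cast
    field_simp
    ring

theorem coeff_zero_hermitePhys_of_odd {n : ℕ} (hn : Odd n) : (hermitePhys n).coeff 0 = 0 := by
  obtain ⟨j, rfl⟩ := hn
  induction j with
  | zero => simp [hermitePhys]
  | succ j ih => rw [show 2 * (j + 1) + 1 = 2 * j + 1 + 2 by ring, coeff_zero_hermitePhys_add_two,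
      ih, mul_zero]

/-- The Taylor coefficient `H_m(0) / (2^m m!)` of `exp (-s ^ 2 / 4)`. -/
def hermiteExpCoeff (m : ℕ) : ℂ := (hermitePhys m).coeff 0 / (2 ^ m * m.factorial)

theorem hasSum_hermiteExpCoeff (s : ℂ) :
    HasSum (fun m ↦ hermiteExpCoeff m * s ^ m) (exp (-s ^ 2 / 4)) := by
  have heven : HasSum (fun j ↦ hermiteExpCoeff (2 * j) * s ^ (2 * j)) (exp (-s ^ 2 / 4)) := by
    rw [exp_eq_exp_ℂ]
    refine (NormedSpace.expSeries_div_hasSum_exp (-s ^ 2 / 4)).congr_fun fun j ↦ ?_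
    rw [hermiteExpCoeff, coeff_zero_hermitePhys_two_mul, div_pow, neg_pow (s ^ 2), ← pow_mul,
      pow_mul 2]
    have hfac : ((2 * j).factorial : ℂ) ≠ 0 := Nat.cast_ne_zero.2 (Nat.factorial_ne_zero _)
    push_cast
    field_simp
    ring
  have hinj : Function.Injective (2 * · : ℕ → ℕ) := mul_right_injective₀ two_ne_zero
  refine (hinj.hasSum_iff fun n hn ↦ ?_).1 heven
  have hodd : Odd n := by
    rw [← Nat.not_even_iff_odd]
    rintro ⟨j, rfl⟩
    exact hn ⟨j, two_mul j⟩
  rw [hermiteExpCoeff, coeff_zero_hermitePhys_of_odd hodd, ofReal_zero, zero_div, zero_mul]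

theorem sqrt_pi_mul_cCoef (f : ℝ → ℂ) (n : ℕ) (x : ℝ) :
    (Real.sqrt Real.pi : ℂ) * cCoef f n x = ∑ k ∈ range (n + 1),
      (formalPower f k x - (x : ℂ) ^ k) / k.factorial * hermiteExpCoeff (n - k) := by
  have hpi : (Real.sqrt Real.pi : ℂ) ≠ 0 := ofReal_ne_zero.2 (Real.sqrt_pos.2 Real.pi_pos).ne'
  rw [cCoef, ← mul_assoc, mul_sum]
  refine sum_congr rfl fun k hk ↦ ?_
  obtain ⟨m, rfl⟩ := Nat.exists_eq_add_of_le' (Nat.lt_succ_iff.1 (mem_range.1 hk))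
  have hchoose : ((m + k).choose k * k.factorial * m.factorial : ℂ) = (m + k).factorial := by
    rw [mul_right_comm]
    exact_mod_cast Nat.add_choose_mul_factorial_mul_factorial m k
  have hchoose_ne : ((m + k).choose k : ℂ) ≠ 0 :=
    Nat.cast_ne_zero.2 (Nat.choose_pos (Nat.le_add_left k m)).ne'
  rw [coeff_hermitePhys_add, hermiteExpCoeff, Nat.add_sub_cancel, ← hchoose]
  push_cast
  field_simp
  ring

theorem hasSum_cCoef_mul_pow {f : ℝ → ℂ} {x : ℝ} {s F : ℂ}
    (hF : HasSum (fun k ↦ (formalPower f k x - (x : ℂ) ^ k) / k.factorial * s ^ k) F) :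
    HasSum (fun n ↦ Real.sqrt Real.pi * cCoef f n x * s ^ n) (F * exp (-s ^ 2 / 4)) := by
  have hE := hasSum_hermiteExpCoeff s
  have hprod := hasSum_sum_range_mul_of_summable_norm hF.summable.norm hE.summable.norm
  rw [hF.tsum_eq, hE.tsum_eq] at hprod
  refine hprod.congr_fun fun n ↦ ?_
  rw [sqrt_pi_mul_cCoef, sum_mul]
  refine sum_congr rfl fun k hk ↦ ?_
  rw [mul_mul_mul_comm, ← pow_add, Nat.add_sub_cancel' (Nat.lt_succ_iff.1 (mem_range.1 hk))]

end Hermite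

section AlternatingIntegrals

/-- The iterated integrals with weights taken alternately from `p` and `r`, the outermost weight
being `p`. Up to the factor `n!`, the formal powers are those with weights `f⁻²` and `f²`. -/
def altIntegral (p r : ℝ → ℂ) : ℕ → ℝ → ℂ
  | 0, _ => 1
  | n + 1, x => ∫ t in (0 : ℝ)..x, p t * altIntegral r p n t

theorem formalX_eq_altIntegral (f : ℝ → ℂ) (n : ℕ) (x : ℝ) :
    formalX f n x = n.factorial * altIntegral (fun t ↦ (f t ^ 2) ^ ((-1 : ℤ) ^ n))
      (fun t ↦ (f t ^ 2) ^ ((-1 : ℤ) ^ (n + 1))) n x := by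
  induction n generalizing x with
  | zero => simp [formalX, altIntegral]
  | succ n ih =>
    rw [formalX, altIntegral, pow_add _ n 2, neg_one_sq, mul_one, Nat.factorial_succ, Nat.cast_mul,
      mul_assoc, ← intervalIntegral.integral_const_mul, Nat.cast_succ]
    simp only [ih, mul_assoc, mul_comm (altIntegral _ _ _ _)]

theorem formalXt_eq_altIntegral (f : ℝ → ℂ) (n : ℕ) (x : ℝ) :
    formalXt f n x = n.factorial * altIntegral (fun t ↦ (f t ^ 2) ^ ((-1 : ℤ) ^ (n + 1)))
      (fun t ↦ (f t ^ 2) ^ ((-1 : ℤ) ^ n)) n x := by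
  induction n generalizing x with
  | zero => simp [formalXt, altIntegral]
  | succ n ih =>
    rw [formalXt, altIntegral, pow_add _ n 2, neg_one_sq, mul_one, Nat.factorial_succ, Nat.cast_mul,
      mul_assoc, ← intervalIntegral.integral_const_mul, Nat.cast_succ]
    simp only [ih, mul_assoc, mul_comm (altIntegral _ _ _ _)]

theorem formalPower_eq_altIntegral (f : ℝ → ℂ) (k : ℕ) (x : ℝ) :
    formalPower f k x =
      f x * (k.factorial * altIntegral (fun t ↦ (f t ^ 2)⁻¹) (fun t ↦ f t ^ 2) k x) := by
  rw [formalPower, formalX_eq_altIntegral, formalXt_eq_altIntegral]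
  split_ifs with hk
  · simp [hk.neg_one_pow, hk.add_one.neg_one_pow]
  · have hk := Nat.not_odd_iff_even.1 hk
    simp [hk.neg_one_pow, hk.add_one.neg_one_pow]

variable {p r : ℝ → ℂ}

theorem altIntegral_succ_zero (n : ℕ) : altIntegral p r (n + 1) 0 = 0 :=
  intervalIntegral.integral_same

theorem altIntegral_congr {p' r' : ℝ → ℂ} {x : ℝ} (hp : EqOn p p' (uIcc 0 x))
    (hr : EqOn r r' (uIcc 0 x)) (n : ℕ) : altIntegral p r n x = altIntegral p' r' n x := by
  induction n generalizing p r p' r' x with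
  | zero => rfl
  | succ n ih =>
    refine intervalIntegral.integral_congr fun t ht ↦ ?_
    have hsub : uIcc 0 t ⊆ uIcc 0 x := uIcc_subset_uIcc_left ht
    simp only [hp ht, ih (hr.mono hsub) (hp.mono hsub)]

theorem norm_altIntegral_le {M x : ℝ} (hp : ∀ t ∈ uIcc 0 x, ‖p t‖ ≤ M)
    (hr : ∀ t ∈ uIcc 0 x, ‖r t‖ ≤ M) (n : ℕ) :
    ‖altIntegral p r n x‖ ≤ (M * |x|) ^ n / n.factorial := by
  have hM : 0 ≤ M := (norm_nonneg _).trans (hp 0 left_mem_uIcc)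
  induction n generalizing p r x with
  | zero => simp [altIntegral]
  | succ n ih =>
    have hbound : ∀ t ∈ uIoc 0 x,
        ‖p t * altIntegral r p n t‖ ≤ M ^ (n + 1) / n.factorial * |t - 0| ^ n := by
      intro t ht
      have ht := uIoc_subset_uIcc ht
      have hsub : uIcc 0 t ⊆ uIcc 0 x := uIcc_subset_uIcc_left ht
      calc ‖p t * altIntegral r p n t‖
          ≤ M * ((M * |t|) ^ n / n.factorial) := by
            rw [norm_mul]
            gcongr
            exacts [hp t ht, ih (fun u hu ↦ hr u (hsub hu)) fun u hu ↦ hp u (hsub hu)]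
        _ = M ^ (n + 1) / n.factorial * |t - 0| ^ n := by rw [sub_zero]; ring
    calc ‖altIntegral p r (n + 1) x‖
        = ‖∫ t in uIoc 0 x, p t * altIntegral r p n t‖ :=
          intervalIntegral.norm_intervalIntegral_eq ..
      _ ≤ ∫ t in uIoc 0 x, M ^ (n + 1) / n.factorial * |t - 0| ^ n :=
          norm_integral_le_of_norm_le
            ((Continuous.integrableOn_uIcc (by fun_prop)).mono_set uIoc_subset_uIcc)
            ((ae_restrict_mem measurableSet_uIoc).mono hbound)
      _ = (M * |x|) ^ (n + 1) / (n + 1).factorial := by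
          rw [integral_const_mul, integral_pow_abs_sub_uIoc, sub_zero, Nat.factorial_succ]
          push_cast
          field_simp
          ring

theorem continuous_altIntegral (hp : Continuous p) (hr : Continuous r) (n : ℕ) :
    Continuous (altIntegral p r n) := by
  induction n generalizing p r with
  | zero => exact continuous_const
  | succ n ih =>
    exact intervalIntegral.continuous_primitive
      (fun _ _ ↦ (hp.mul (ih hr hp)).intervalIntegrable _ _) 0

theorem hasDerivAt_altIntegral_succ (hp : Continuous p) (hr : Continuous r) (n : ℕ) (x : ℝ) :
    HasDerivAt (altIntegral p r (n + 1)) (p x * altIntegral r p n x) x :=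
  (hp.mul (continuous_altIntegral hr hp n)).integral_hasStrictDerivAt 0 x |>.hasDerivAt

/-- The generating function of the iterated integrals `altIntegral p r n`; with `r p` in place of
`p r` it solves a first-order system, see `hasDerivAt_altSeries`. -/
def altSeries (p r : ℝ → ℂ) (s : ℂ) (x : ℝ) : ℂ := ∑' n, altIntegral p r n x * s ^ n

theorem altSeries_zero_right (s : ℂ) : altSeries p r s 0 = 1 := by
  rw [altSeries, tsum_eq_single 0]
  · simp [altIntegral]
  · rintro (_ | n) hn
    · exact absurd rfl hn
    · rw [altIntegral_succ_zero, zero_mul]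

theorem exists_norm_le_of_continuous (hp : Continuous p) (hr : Continuous r) (R : ℝ) :
    ∃ M, ∀ t ∈ Icc (-R) R, ‖p t‖ ≤ M ∧ ‖r t‖ ≤ M := by
  obtain ⟨P, hP⟩ := isCompact_Icc.exists_bound_of_continuousOn (s := Icc (-R) R) hp.continuousOn
  obtain ⟨S, hS⟩ := isCompact_Icc.exists_bound_of_continuousOn (s := Icc (-R) R) hr.continuousOn
  exact ⟨max P S, fun t ht ↦
    ⟨(hP t ht).trans (le_max_left P S), (hS t ht).trans (le_max_right P S)⟩⟩

theorem norm_altIntegral_mul_pow_le {M R x : ℝ} (hM : ∀ t ∈ Icc (-R) R, ‖p t‖ ≤ M ∧ ‖r t‖ ≤ M)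
    (hx : |x| ≤ R) (s : ℂ) (n : ℕ) :
    ‖altIntegral p r n x * s ^ n‖ ≤ (M * R * ‖s‖) ^ n / n.factorial := by
  have hR : 0 ≤ R := (abs_nonneg x).trans hx
  have hsub : uIcc 0 x ⊆ Icc (-R) R := uIcc_subset_Icc ⟨neg_nonpos.2 hR, hR⟩ (abs_le.1 hx)
  have hM0 : 0 ≤ M := (norm_nonneg _).trans (hM x (abs_le.1 hx)).1
  rw [norm_mul, norm_pow, mul_pow _ ‖s‖, mul_div_right_comm]
  gcongr
  calc ‖altIntegral p r n x‖
      ≤ (M * |x|) ^ n / n.factorial :=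
        norm_altIntegral_le (fun t ht ↦ (hM t (hsub ht)).1) (fun t ht ↦ (hM t (hsub ht)).2) n
    _ ≤ (M * R) ^ n / n.factorial := by gcongr

theorem summable_altIntegral_mul_pow (hp : Continuous p) (hr : Continuous r) (s : ℂ) (x : ℝ) :
    Summable fun n ↦ altIntegral p r n x * s ^ n := by
  obtain ⟨M, hM⟩ := exists_norm_le_of_continuous hp hr |x|
  exact .of_norm_bounded (Real.summable_pow_div_factorial _)
    (norm_altIntegral_mul_pow_le hM le_rfl s)

theorem hasDerivAt_altSeries (hp : Continuous p) (hr : Continuous r) (s : ℂ) (x : ℝ) :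
    HasDerivAt (altSeries p r s) (s * p x * altSeries r p s x) x := by
  have hshift : altSeries p r s = fun x ↦ 1 + ∑' n, altIntegral p r (n + 1) x * s ^ (n + 1) := by
    ext x
    rw [altSeries, (summable_altIntegral_mul_pow hp hr s x).tsum_eq_zero_add, altIntegral, pow_zero,
      mul_one]
  set R := |x| + 1
  have hx : x ∈ Metric.ball 0 R := by simp [R]
  obtain ⟨M, hM⟩ := exists_norm_le_of_continuous hr hp R
  rw [hshift, altSeries, ← tsum_mul_left]
  refine .const_add 1 (hasDerivAt_tsum_of_isPreconnected
    (g := fun n t ↦ altIntegral p r (n + 1) t * s ^ (n + 1))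
    (g' := fun n t ↦ s * p t * (altIntegral r p n t * s ^ n))
    ((Real.summable_pow_div_factorial (M * R * ‖s‖)).mul_left (‖s‖ * M)) Metric.isOpen_ball
    (convex_ball 0 R).isPreconnected (fun n t _ ↦ ?_) (fun n t ht ↦ ?_) hx ?_ hx)
  · exact ((hasDerivAt_altIntegral_succ hp hr n t).mul_const (s ^ (n + 1))).congr_deriv (by ring)
  · have ht : |t| ≤ R := (mem_ball_zero_iff.1 ht).le
    rw [norm_mul, norm_mul]
    exact mul_le_mul (mul_le_mul_of_nonneg_left (hM t (abs_le.1 ht)).2 (norm_nonneg s))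
      (norm_altIntegral_mul_pow_le hM ht s n) (norm_nonneg _)
      (mul_nonneg (norm_nonneg s) ((norm_nonneg _).trans (hM t (abs_le.1 ht)).2))
  · exact (summable_nat_add_iff (f := fun n ↦ altIntegral p r n x * s ^ n) 1).2
      (summable_altIntegral_mul_pow hp hr s x)

end AlternatingIntegrals

section ODE

/-- `y` is a solution of `y'' = p y` on `s`, with derivative `y'`. The derivatives are two-sided
also at the endpoints of an interval `s`. -/
structure IsSolutionOn (p y y' : ℝ → ℂ) (s : Set ℝ) : Prop where
  hasDerivAt : ∀ t ∈ s, HasDerivAt y (y' t) t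
  hasDerivAt_deriv : ∀ t ∈ s, HasDerivAt y' (p t * y t) t

theorem IsSolutionOn.continuousOn {p y y' : ℝ → ℂ} {s : Set ℝ} (hy : IsSolutionOn p y y' s) :
    ContinuousOn y s :=
  HasDerivAt.continuousOn hy.hasDerivAt

theorem IsSolutionOn.eqOn {p y y' z z' : ℝ → ℂ} {a b t₀ P : ℝ} (hp : ∀ t ∈ Icc a b, ‖p t‖ ≤ P)
    (ht₀ : t₀ ∈ Ioo a b) (hy : IsSolutionOn p y y' (Icc a b)) (hz : IsSolutionOn p z z' (Icc a b))
    (h : y t₀ = z t₀) (h' : y' t₀ = z' t₀) : EqOn y z (Icc a b) := by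
  have hsystem : ∀ {u u' : ℝ → ℂ}, IsSolutionOn p u u' (Icc a b) → ∀ t ∈ Icc a b,
      HasDerivAt (fun t ↦ (u t, u' t)) (u' t, p t * u t) t := fun hu t ht ↦
    (hu.hasDerivAt t ht).prodMk (hu.hasDerivAt_deriv t ht)
  have hlip : ∀ t ∈ Ioo a b,
      LipschitzOnWith (max 1 P.toNNReal) (fun u : ℂ × ℂ ↦ (u.2, p t * u.1)) univ := by
    intro t ht
    refine (LipschitzWith.prod_snd.prodMk (.of_dist_le_mul fun u v ↦ ?_)).lipschitzOnWith
    rw [dist_eq_norm, dist_eq_norm, ← mul_sub, norm_mul]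
    gcongr
    · exact (hp t (Ioo_subset_Icc_self ht)).trans (Real.le_coe_toNNReal P)
    · exact norm_fst_le (u - v)
  have heq := ODE_solution_unique_of_mem_Icc hlip ht₀
    (HasDerivAt.continuousOn (hsystem hy)) (fun t ht ↦ hsystem hy t (Ioo_subset_Icc_self ht))
    (fun _ _ ↦ mem_univ _)
    (HasDerivAt.continuousOn (hsystem hz)) (fun t ht ↦ hsystem hz t (Ioo_subset_Icc_self ht))
    (fun _ _ ↦ mem_univ _) (Prod.ext h h')
  exact fun t ht ↦ congrArg Prod.fst (heq ht)

/-- Pólya factorization: `∂² - q = f⁻¹ ∂ f² ∂ f⁻¹`, so the eigenvalue equation for `s ^ 2` is solved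
by `f` times a generating function of iterated integrals with weights `f⁻²` and `f²`. -/
theorem IsSolutionOn.mul_altSeries {q f f' p r : ℝ → ℂ} {S : Set ℝ} (hf : IsSolutionOn q f f' S)
    (hfne : ∀ t ∈ S, f t ≠ 0) (hp : Continuous p) (hr : Continuous r)
    (hpf : EqOn p (fun t ↦ (f t ^ 2)⁻¹) S) (hrf : EqOn r (fun t ↦ f t ^ 2) S) (s : ℂ) :
    IsSolutionOn (fun t ↦ q t + s ^ 2) (fun t ↦ f t * altSeries p r s t)
      (fun t ↦ f' t * altSeries p r s t + s * altSeries r p s t / f t) S where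
  hasDerivAt t ht := by
    refine ((hf.hasDerivAt t ht).mul (hasDerivAt_altSeries hp hr s t)).congr_deriv ?_
    have := hfne t ht
    rw [hpf ht]
    field_simp
  hasDerivAt_deriv t ht := by
    refine (((hf.hasDerivAt_deriv t ht).mul (hasDerivAt_altSeries hp hr s t)).add
      (((hasDerivAt_altSeries hr hp s t).const_mul s).div (hf.hasDerivAt t ht)
        (hfne t ht))).congr_deriv ?_
    have := hfne t ht
    rw [hpf ht, hrf ht]
    field_simp
    ring

theorem hasSum_formalPower {f p r : ℝ → ℂ} {x : ℝ} (hp : Continuous p) (hr : Continuous r)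
    (hpf : EqOn p (fun t ↦ (f t ^ 2)⁻¹) (uIcc 0 x)) (hrf : EqOn r (fun t ↦ f t ^ 2) (uIcc 0 x))
    (s : ℂ) :
    HasSum (fun k ↦ formalPower f k x / k.factorial * s ^ k) (f x * altSeries p r s x) := by
  refine ((summable_altIntegral_mul_pow hp hr s x).hasSum.mul_left (f x)).congr_fun fun k ↦ ?_
  rw [formalPower_eq_altIntegral, ← altIntegral_congr hpf hrf]
  have := Nat.cast_ne_zero (R := ℂ) |>.2 k.factorial_ne_zero
  field_simp

theorem exists_isSolutionOn_hasSum_formalPower {b : ℝ} (hb : 0 ≤ b) {q f f' : ℝ → ℂ}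
    (hf : IsSolutionOn q f f' (Icc (-b) b)) (hf0 : f 0 = 1) (hf'0 : f' 0 = 0)
    (hfne : ∀ x ∈ Icc (-b) b, f x ≠ 0) (s : ℂ) :
    ∃ y y' : ℝ → ℂ, IsSolutionOn (fun t ↦ q t + s ^ 2) y y' (Icc (-b) b) ∧ y 0 = 1 ∧ y' 0 = s ∧
      ∀ x ∈ Icc (-b) b, HasSum (fun k ↦ formalPower f k x / k.factorial * s ^ k) (y x) := by
  have hle : -b ≤ b := neg_le_self hb
  set g : ℝ → ℂ := IccExtend hle ((Icc (-b) b).domRestrict f)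
  have hg : Continuous g := hf.continuousOn.domRestrict.Icc_extend'
  have hgf : EqOn g f (Icc (-b) b) := fun t ht ↦ IccExtend_of_mem hle _ ht
  have hgne : ∀ t, g t ^ 2 ≠ 0 := fun t ↦ pow_ne_zero 2 (hfne _ (projIcc (-b) b hle t).2)
  have hp : Continuous fun t ↦ (g t ^ 2)⁻¹ := (hg.pow 2).inv₀ hgne
  have hr : Continuous fun t ↦ g t ^ 2 := hg.pow 2
  have hpf : EqOn (fun t ↦ (g t ^ 2)⁻¹) (fun t ↦ (f t ^ 2)⁻¹) (Icc (-b) b) :=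
    fun t ht ↦ by simp only [hgf ht]
  have hrf : EqOn (fun t ↦ g t ^ 2) (fun t ↦ f t ^ 2) (Icc (-b) b) :=
    fun t ht ↦ by simp only [hgf ht]
  refine ⟨_, _, hf.mul_altSeries hfne hp hr hpf hrf s, ?_, ?_, fun x hx ↦ ?_⟩
  · simp [hf0, altSeries_zero_right]
  · simp [hf0, hf'0, altSeries_zero_right]
  · have hsub : uIcc 0 x ⊆ Icc (-b) b := uIcc_subset_Icc ⟨neg_nonpos.2 hb, hb⟩ hx
    exact hasSum_formalPower hp hr (hpf.mono hsub) (hrf.mono hsub) s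

theorem IsSolutionOn.hasSum_formalPower {b Q : ℝ} (hb : 0 < b) {q f f' y y' : ℝ → ℂ} {s : ℂ}
    (hq : ∀ x ∈ Icc (-b) b, ‖q x‖ ≤ Q)
    (hf : IsSolutionOn q f f' (Icc (-b) b)) (hf0 : f 0 = 1) (hf'0 : f' 0 = 0)
    (hfne : ∀ x ∈ Icc (-b) b, f x ≠ 0)
    (hy : IsSolutionOn (fun t ↦ q t + s ^ 2) y y' (Icc (-b) b)) (hy0 : y 0 = 1) (hy'0 : y' 0 = s)
    {x : ℝ} (hx : x ∈ Icc (-b) b) :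
    HasSum (fun k ↦ formalPower f k x / k.factorial * s ^ k) (y x) := by
  obtain ⟨z, z', hz, hz0, hz'0, hsum⟩ :=
    exists_isSolutionOn_hasSum_formalPower hb.le hf hf0 hf'0 hfne s
  have hbound : ∀ t ∈ Icc (-b) b, ‖q t + s ^ 2‖ ≤ Q + ‖s ^ 2‖ := fun t ht ↦
    (norm_add_le _ _).trans (add_le_add_left (hq t ht) _)
  rw [hy.eqOn hbound ⟨neg_lt_zero.2 hb, hb⟩ hz (hy0.trans hz0.symm) (hy'0.trans hz'0.symm) hx]
  exact hsum x hx

end ODE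

section Growth

theorem norm_sin_le_exp_abs_im (z : ℂ) : ‖sin z‖ ≤ Real.exp |z.im| := by
  have h1 : ‖exp (-z * I)‖ ≤ Real.exp |z.im| := by
    rw [norm_exp]
    simpa using le_abs_self z.im
  have h2 : ‖exp (z * I)‖ ≤ Real.exp |z.im| := by
    rw [norm_exp]
    simpa using neg_le_abs z.im
  rw [sin, norm_div, norm_mul, norm_I, mul_one, Complex.norm_two, div_le_iff₀ two_pos]
  linarith [norm_sub_le (exp (-z * I)) (exp (z * I))]

theorem norm_exp_I_mul_mul_ofReal_le (w : ℂ) (x : ℝ) :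
    ‖exp (I * w * x)‖ ≤ Real.exp (|w.im| * |x|) := by
  rw [norm_exp, ← abs_mul]
  simpa using neg_le_abs (w.im * x)

variable {q y y' : ℝ → ℂ} {b Q : ℝ} {w : ℂ}

theorem IsSolutionOn.hasDerivAt_deriv_mul_sin_add_mul_cos {s : Set ℝ} (hw : w ≠ 0)
    (hy : IsSolutionOn (fun t ↦ q t + (I * w) ^ 2) y y' s) (x : ℝ) {t : ℝ} (ht : t ∈ s) :
    HasDerivAt (fun t : ℝ ↦ y' t * (sin (w * (x - t)) / w) + y t * cos (w * (x - t)))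
      (q t * y t * (sin (w * (x - t)) / w)) t := by
  have harg : HasDerivAt (fun z : ℂ ↦ w * (x - z)) (w * -1) t :=
    ((hasDerivAt_id (t : ℂ)).const_sub (x : ℂ)).const_mul w
  refine (((hy.hasDerivAt_deriv t ht).mul (harg.csin.comp_ofReal.div_const w)).add
    ((hy.hasDerivAt t ht).mul harg.ccos.comp_ofReal)).congr_deriv ?_
  rw [mul_pow, I_sq]
  field_simp
  ring

theorem IsSolutionOn.norm_sub_exp_le (hq : ∀ t ∈ Icc (-b) b, ‖q t‖ ≤ Q) (hw : w ≠ 0)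
    (hy : IsSolutionOn (fun t ↦ q t + (I * w) ^ 2) y y' (Icc (-b) b)) (hy0 : y 0 = 1)
    (hy'0 : y' 0 = I * w) {m : ℝ} (hm : ∀ t ∈ Icc (-b) b, ‖y t‖ ≤ m * Real.exp (|w.im| * |t|))
    {x : ℝ} (hx : x ∈ Icc (-b) b) :
    ‖y x - exp (I * w * x)‖ ≤ Q * m / ‖w‖ * Real.exp (|w.im| * |x|) * |x| := by
  -- Variation of constants in differential form: `h 0 = exp (I * w * x)`, `h x = y x`, and `q`
  -- factors out of the derivative of `h`.
  set h : ℝ → ℂ := fun t ↦ y' t * (sin (w * (x - t)) / w) + y t * cos (w * (x - t))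
  have hb : 0 ≤ b := by linarith [hx.1, hx.2]
  have hsub : uIcc 0 x ⊆ Icc (-b) b := uIcc_subset_Icc ⟨neg_nonpos.2 hb, hb⟩ hx
  have hQ : 0 ≤ Q := (norm_nonneg _).trans (hq x hx)
  have hderiv : ∀ t ∈ uIcc 0 x,
      HasDerivWithinAt h (q t * y t * (sin (w * (x - t)) / w)) (uIcc 0 x) t := fun t ht ↦
    (hy.hasDerivAt_deriv_mul_sin_add_mul_cos hw x (hsub ht)).hasDerivWithinAt
  have hbound : ∀ t ∈ uIcc 0 x, ‖q t * y t * (sin (w * (x - t)) / w)‖ ≤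
      Q * m / ‖w‖ * Real.exp (|w.im| * |x|) := by
    intro t ht
    have habs : |t| + |x - t| = |x| := by
      have hdist := dist_add_dist_of_mem_segment (segment_eq_uIcc 0 x ▸ ht)
      rwa [dist_zero_left, dist_zero_left, dist_comm, Real.dist_eq] at hdist
    have hsin : ‖sin (w * (x - t))‖ ≤ Real.exp (|w.im| * |x - t|) := by
      simpa [abs_mul] using norm_sin_le_exp_abs_im (w * (x - t))
    rw [norm_mul, norm_mul, norm_div, ← habs, mul_add, Real.exp_add]
    calc ‖q t‖ * ‖y t‖ * (‖sin (w * (x - t))‖ / ‖w‖)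
        ≤ Q * (m * Real.exp (|w.im| * |t|)) * (Real.exp (|w.im| * |x - t|) / ‖w‖) := by
          have hy_t := hm t (hsub ht)
          have hq_t := hq t (hsub ht)
          gcongr
          exact mul_nonneg hQ ((norm_nonneg _).trans hy_t)
      _ = _ := by ring
  have hx1 : h x = y x := by simp [h]
  have hx0 : h 0 = exp (I * w * x) := by
    rw [show I * w * x = w * x * I by ring, exp_mul_I]
    simp only [h, hy0, hy'0, ofReal_zero, sub_zero]
    field_simp
    ring
  simpa [hx1, hx0] using (convex_uIcc 0 x).norm_image_sub_le_of_norm_hasDerivWithin_le hderiv hbound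
    left_mem_uIcc right_mem_uIcc

theorem IsSolutionOn.norm_le_two_mul_exp (hq : ∀ t ∈ Icc (-b) b, ‖q t‖ ≤ Q) (hw : w ≠ 0)
    (hwQ : 2 * (Q * b) ≤ ‖w‖)
    (hy : IsSolutionOn (fun t ↦ q t + (I * w) ^ 2) y y' (Icc (-b) b)) (hy0 : y 0 = 1)
    (hy'0 : y' 0 = I * w) {x : ℝ} (hx : x ∈ Icc (-b) b) :
    ‖y x‖ ≤ 2 * Real.exp (|w.im| * |x|) := by
  obtain ⟨t₀, ht₀, hmax⟩ := isCompact_Icc.exists_isMaxOn ⟨x, hx⟩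
    (hy.continuousOn.norm.div (g := fun t ↦ Real.exp (|w.im| * |t|)) (by fun_prop)
      fun _ _ ↦ (Real.exp_pos _).ne')
  set m := ‖y t₀‖ / Real.exp (|w.im| * |t₀|)
  have hm : ∀ t ∈ Icc (-b) b, ‖y t‖ ≤ m * Real.exp (|w.im| * |t|) := fun t ht ↦
    (div_le_iff₀ (Real.exp_pos _)).1 (hmax ht)
  have hm0 : 0 ≤ m := by positivity
  have hQ : 0 ≤ Q := (norm_nonneg _).trans (hq x hx)
  have hself : m ≤ 1 + m / 2 := by
    rw [div_le_iff₀ (Real.exp_pos _)]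
    calc ‖y t₀‖ ≤ ‖exp (I * w * t₀)‖ + ‖y t₀ - exp (I * w * t₀)‖ := norm_le_insert' _ _
      _ ≤ Real.exp (|w.im| * |t₀|) + Q * m / ‖w‖ * Real.exp (|w.im| * |t₀|) * |t₀| :=
        add_le_add (norm_exp_I_mul_mul_ofReal_le w t₀) (hy.norm_sub_exp_le hq hw hy0 hy'0 hm ht₀)
      _ = (1 + Q * |t₀| / ‖w‖ * m) * Real.exp (|w.im| * |t₀|) := by ring
      _ ≤ (1 + 1 / 2 * m) * Real.exp (|w.im| * |t₀|) := by
        have hhalf : Q * |t₀| / ‖w‖ ≤ 1 / 2 := by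
          rw [div_le_iff₀ (norm_pos_iff.2 hw)]
          linarith [mul_le_mul_of_nonneg_left (abs_le.2 ht₀) hQ]
        have := mul_le_mul_of_nonneg_right hhalf hm0
        gcongr
      _ = _ := by ring
  refine (hm x hx).trans ?_
  gcongr
  linarith

theorem IsSolutionOn.norm_sub_exp_le_of_le_norm (hq : ∀ t ∈ Icc (-b) b, ‖q t‖ ≤ Q) (hw : w ≠ 0)
    (hwQ : 2 * (Q * b) ≤ ‖w‖)
    (hy : IsSolutionOn (fun t ↦ q t + (I * w) ^ 2) y y' (Icc (-b) b)) (hy0 : y 0 = 1)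
    (hy'0 : y' 0 = I * w) {x : ℝ} (hx : x ∈ Icc (-b) b) :
    ‖y x - exp (I * w * x)‖ ≤ Q * 2 / ‖w‖ * Real.exp (|w.im| * |x|) * |x| :=
  hy.norm_sub_exp_le hq hw hy0 hy'0 (fun _ ht ↦ hy.norm_le_two_mul_exp hq hw hwQ hy0 hy'0 ht) hx

end Growth

section Fock

variable {a : ℕ → ℂ} {G : ℂ → ℂ}

theorem continuous_of_hasSum_mul_pow (hG : ∀ w, HasSum (fun n ↦ a n * w ^ n) (G w)) :
    Continuous G := by
  refine continuous_iff_continuousAt.2 fun w ↦ ?_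
  have hball : ContinuousOn (fun z ↦ ∑' n, a n * z ^ n) (Metric.ball 0 (‖w‖ + 1)) := by
    refine continuousOn_tsum (fun n ↦ by fun_prop) (hG (‖w‖ + 1 : ℝ)).summable.norm fun n z hz ↦ ?_
    rw [norm_mul, norm_mul, norm_pow, norm_pow, norm_real, Real.norm_eq_abs]
    gcongr
    exact (mem_ball_zero_iff.1 hz).le.trans (le_abs_self _)
  simp only [(hG _).tsum_eq] at hball
  exact hball.continuousAt (Metric.isOpen_ball.mem_nhds (by simp))

theorem sum_sq_norm_mul_pow_eq_circleAverage (a : ℕ → ℂ) (r : ℝ) (N : ℕ) :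
    ∑ n ∈ range N, ‖a n‖ ^ 2 * r ^ (2 * n) =
      Real.circleAverage (fun w ↦ ‖∑ n ∈ range N, a n * w ^ n‖ ^ 2) 0 r := by
  set p : Polynomial ℂ := ∑ n ∈ range N, .monomial n (a n * r ^ n)
  have hcoeff : ∀ n, p.coeff n = if n < N then a n * r ^ n else 0 := fun n ↦ by
    simp [p, Polynomial.coeff_monomial]
  have hsupport : p.support ⊆ range N := fun n hn ↦ by
    by_contra hN
    exact Polynomial.mem_support_iff.1 hn ((hcoeff n).trans (if_neg (by simpa using hN)))
  rw [Real.circleAverage_eq_circleAverage_zero_one]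
  convert p.sum_sq_norm_coeff_eq_circleAverage using 1
  · rw [sum_subset hsupport fun n _ hn ↦ by simp [Polynomial.notMem_support_iff.1 hn]]
    refine sum_congr rfl fun n hn ↦ ?_
    rw [hcoeff, if_pos (mem_range.1 hn), norm_mul, norm_pow, norm_real, mul_pow, pow_right_comm,
      Real.norm_eq_abs, sq_abs, pow_mul]
  · congr! 5 with w
    rw [Polynomial.eval_finsetSum]
    refine sum_congr rfl fun n _ ↦ ?_
    rw [Polynomial.eval_monomial, add_zero, mul_pow, mul_assoc]

theorem hasSum_sq_norm_circleAverage (hG : ∀ w, HasSum (fun n ↦ a n * w ^ n) (G w)) (r : ℝ) :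
    HasSum (fun n ↦ ‖a n‖ ^ 2 * r ^ (2 * n)) (Real.circleAverage (fun w ↦ ‖G w‖ ^ 2) 0 r) := by
  rw [hasSum_iff_tendsto_nat_of_nonneg fun n ↦
    mul_nonneg (sq_nonneg _) (by rw [pow_mul]; positivity)]
  simp only [sum_sq_norm_mul_pow_eq_circleAverage, Real.circleAverage]
  refine Tendsto.const_smul (intervalIntegral.tendsto_integral_filter_of_dominated_convergence
    (fun _ ↦ (∑' n, ‖a n * r ^ n‖) ^ 2) ?_ ?_ intervalIntegrable_const ?_) _
  · exact .of_forall fun N ↦ Continuous.aestronglyMeasurable (by fun_prop)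
  · refine .of_forall fun N ↦ .of_forall fun θ _ ↦ ?_
    rw [Real.norm_of_nonneg (by positivity)]
    gcongr
    calc ‖∑ n ∈ range N, a n * circleMap 0 r θ ^ n‖
        ≤ ∑ n ∈ range N, ‖a n * circleMap 0 r θ ^ n‖ := norm_sum_le _ _
      _ = ∑ n ∈ range N, ‖a n * r ^ n‖ := by simp
      _ ≤ ∑' n, ‖a n * r ^ n‖ := (hG r).summable.norm.sum_le_tsum _ fun _ _ ↦ norm_nonneg _
  · exact .of_forall fun θ _ ↦ (hG _).tendsto_sum_nat.norm.pow 2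

theorem polarCoord_symm_eq_circleMap (p : ℝ × ℝ) :
    Complex.polarCoord.symm p = circleMap 0 p.1 p.2 := by
  rw [Complex.polarCoord_symm_apply, circleMap, zero_add, exp_mul_I, ofReal_cos, ofReal_sin]

theorem two_pi_mul_circleAverage_eq_setIntegral (g : ℂ → ℝ) (r : ℝ) :
    2 * Real.pi * Real.circleAverage g 0 r =
      ∫ θ in Ioo (-Real.pi) Real.pi, g (circleMap 0 r θ) := by
  have hperiodic : Function.Periodic (fun θ ↦ g (circleMap 0 r θ)) (2 * Real.pi) :=
    (periodic_circleMap 0 r).comp g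
  rw [Real.circleAverage_def, smul_eq_mul, mul_inv_cancel_left₀ Real.two_pi_pos.ne',
    ← zero_add (2 * Real.pi), hperiodic.intervalIntegral_add_eq 0 (-Real.pi),
    intervalIntegral.integral_of_le (by linarith [Real.pi_pos]), integral_Ioc_eq_integral_Ioo]
  ring_nf

theorem lintegral_sq_norm_circleMap (hG : ∀ w, HasSum (fun n ↦ a n * w ^ n) (G w)) (r : ℝ) :
    ∫⁻ θ in Ioo (-Real.pi) Real.pi, ENNReal.ofReal (‖G (circleMap 0 r θ)‖ ^ 2) =
      ∑' n, ENNReal.ofReal (2 * Real.pi * (‖a n‖ ^ 2 * r ^ (2 * n))) := by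
  have hcont : Continuous fun θ ↦ ‖G (circleMap 0 r θ)‖ ^ 2 :=
    ((continuous_of_hasSum_mul_pow hG).comp (continuous_circleMap 0 r)).norm.pow 2
  have hparseval := (hasSum_sq_norm_circleAverage hG r).mul_left (2 * Real.pi)
  rw [two_pi_mul_circleAverage_eq_setIntegral] at hparseval
  rw [← ofReal_integral_eq_lintegral_ofReal
    (hcont.integrableOn_Icc.mono_set Ioo_subset_Icc_self) (.of_forall fun _ ↦ sq_nonneg _),
    ← hparseval.tsum_eq, ENNReal.ofReal_tsum_of_nonneg (fun n ↦ ?_) hparseval.summable]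
  rw [pow_mul]
  positivity

theorem lintegral_sq_norm_mul_radial (hG : ∀ w, HasSum (fun n ↦ a n * w ^ n) (G w))
    {ρ : ℝ → ENNReal} (hρ : Measurable ρ) :
    ∫⁻ w, ENNReal.ofReal (‖G w‖ ^ 2) * ρ ‖w‖ = ∑' n, ENNReal.ofReal (2 * Real.pi * ‖a n‖ ^ 2) *
      ∫⁻ r in Ioi 0, ENNReal.ofReal (r ^ (2 * n + 1)) * ρ r := by
  have hcont := continuous_of_hasSum_mul_pow hG
  have hmeas : Measurable fun p : ℝ × ℝ ↦ ENNReal.ofReal p.1 *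
      (ENNReal.ofReal (‖G (circleMap 0 p.1 p.2)‖ ^ 2) * ρ ‖circleMap 0 p.1 p.2‖) := by
    simp only [circleMap]
    fun_prop
  rw [← Complex.lintegral_comp_polarCoord_symm, polarCoord_target, Measure.volume_eq_prod,
    ← Measure.prod_restrict]
  simp only [polarCoord_symm_eq_circleMap, smul_eq_mul]
  rw [lintegral_prod _ hmeas.aemeasurable]
  calc _ = ∫⁻ r in Ioi 0, ∑' n, ENNReal.ofReal (2 * Real.pi * ‖a n‖ ^ 2) *
        (ENNReal.ofReal (r ^ (2 * n + 1)) * ρ r) := by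
        refine setLIntegral_congr_fun measurableSet_Ioi fun r (hr : 0 < r) ↦ ?_
        simp only [norm_circleMap_zero, abs_of_pos hr]
        rw [lintegral_const_mul' _ _ ENNReal.ofReal_ne_top, lintegral_mul_const _ (by fun_prop),
          lintegral_sq_norm_circleMap hG, ← ENNReal.tsum_mul_right, ← ENNReal.tsum_mul_left]
        refine tsum_congr fun n ↦ ?_
        rw [← mul_assoc, ← ENNReal.ofReal_mul hr.le, ← mul_assoc (ENNReal.ofReal _),
          ← ENNReal.ofReal_mul (by positivity)]
        ring_nf
    _ = _ := by
        rw [lintegral_tsum fun n ↦ by fun_prop]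
        simp only [lintegral_const_mul' _ _ ENNReal.ofReal_ne_top]

theorem lintegral_pow_mul_exp_neg_sq_div_two (n : ℕ) :
    ∫⁻ r in Ioi 0, ENNReal.ofReal (r ^ (2 * n + 1)) * ENNReal.ofReal (Real.exp (-r ^ 2 / 2)) =
      ENNReal.ofReal (2 ^ n * n.factorial) := by
  have hpow : (-1 : ℝ) < (2 * n + 1 : ℕ) := by linarith [(2 * n + 1).cast_nonneg (α := ℝ)]
  have hintegrand : ∀ r : ℝ, r ^ ((2 * n + 1 : ℕ) : ℝ) * Real.exp (-(1 / 2) * r ^ (2 : ℝ)) =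
      r ^ (2 * n + 1) * Real.exp (-r ^ 2 / 2) := fun r ↦ by
    rw [Real.rpow_natCast, Real.rpow_two]
    ring_nf
  have hint := integrableOn_rpow_mul_exp_neg_mul_rpow hpow two_pos (one_half_pos (α := ℝ))
  have hgamma := integral_rpow_mul_exp_neg_mul_rpow two_pos hpow (one_half_pos (α := ℝ))
  have hexponent : (((2 * n + 1 : ℕ) : ℝ) + 1) / 2 = n + 1 := by push_cast; ring
  simp only [hintegrand] at hint hgamma
  rw [neg_div, hexponent, Real.Gamma_nat_eq_factorial, Real.rpow_neg (by norm_num),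
    ← Nat.cast_add_one, Real.rpow_natCast] at hgamma
  calc _ = ∫⁻ r in Ioi 0, ENNReal.ofReal (r ^ (2 * n + 1) * Real.exp (-r ^ 2 / 2)) :=
        setLIntegral_congr_fun measurableSet_Ioi fun r (hr : 0 < r) ↦
          (ENNReal.ofReal_mul (by positivity)).symm
    _ = ENNReal.ofReal (∫ r in Ioi 0, r ^ (2 * n + 1) * Real.exp (-r ^ 2 / 2)) :=
        (ofReal_integral_eq_lintegral_ofReal hint <|
          (ae_restrict_mem measurableSet_Ioi).mono fun r (hr : 0 < r) ↦ by positivity).symm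
    _ = _ := by
        rw [hgamma, one_div_pow, pow_succ]
        field_simp

theorem summable_two_pow_mul_factorial_mul_sq_norm
    (hG : ∀ w, HasSum (fun n ↦ a n * w ^ n) (G w))
    (hint : Integrable fun w ↦ ‖G w‖ ^ 2 * Real.exp (-‖w‖ ^ 2 / 2)) :
    Summable fun n ↦ 2 ^ n * n.factorial * ‖a n‖ ^ 2 := by
  have hfin := hint.lintegral_lt_top.ne
  simp only [ENNReal.ofReal_mul (sq_nonneg ‖G _‖)] at hfin
  rw [lintegral_sq_norm_mul_radial hG (ρ := fun r ↦ ENNReal.ofReal (Real.exp (-r ^ 2 / 2)))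
    (by fun_prop)] at hfin
  simp only [lintegral_pow_mul_exp_neg_sq_div_two] at hfin
  refine (summable_mul_left_iff Real.two_pi_pos.ne').1
    ((ENNReal.summable_toReal hfin).congr fun n ↦ ?_)
  rw [ENNReal.toReal_mul, ENNReal.toReal_ofReal (by positivity),
    ENNReal.toReal_ofReal (by positivity)]
  ring

/-- The norm in Fock space of the remainder `∑_{n ≥ N} a n * w ^ n`, up to normalization. -/
def fockTail (a : ℕ → ℂ) (N : ℕ) : ℝ :=
  Real.sqrt (∑' n, 2 ^ (n + N) * (n + N).factorial * ‖a (n + N)‖ ^ 2)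

theorem tendsto_fockTail (a : ℕ → ℂ) : Tendsto (fockTail a) atTop (𝓝 0) := by
  rw [← Real.sqrt_zero]
  exact (tendsto_sum_nat_add fun n ↦ 2 ^ n * n.factorial * ‖a n‖ ^ 2).sqrt

theorem norm_sum_mul_pow_le_sqrt_mul_exp (a : ℕ → ℂ) (w : ℂ) (s : Finset ℕ) :
    ‖∑ n ∈ s, a n * w ^ n‖ ≤
      Real.sqrt (∑ n ∈ s, 2 ^ n * n.factorial * ‖a n‖ ^ 2) * Real.exp (‖w‖ ^ 2 / 4) := by
  have hexp : ∑ n ∈ s, (‖w‖ ^ 2 / 2) ^ n / n.factorial ≤ Real.exp (‖w‖ ^ 2 / 2) := by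
    rw [Real.exp_eq_exp_ℝ, NormedSpace.exp_eq_tsum_div]
    exact (Real.summable_pow_div_factorial _).sum_le_tsum _ fun _ _ ↦ by positivity
  calc ‖∑ n ∈ s, a n * w ^ n‖
      ≤ ∑ n ∈ s, ‖a n‖ * ‖w‖ ^ n := (norm_sum_le _ _).trans_eq (by simp only [norm_mul, norm_pow])
    _ ≤ Real.sqrt ((∑ n ∈ s, 2 ^ n * n.factorial * ‖a n‖ ^ 2) *
          ∑ n ∈ s, (‖w‖ ^ 2 / 2) ^ n / n.factorial) :=
        Real.le_sqrt_of_sq_le (sum_sq_le_sum_mul_sum_of_sq_le_mul s (fun _ _ ↦ by positivity)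
          (fun _ _ ↦ by positivity) fun n _ ↦ le_of_eq (by rw [div_pow]; field_simp; ring))
    _ ≤ Real.sqrt (∑ n ∈ s, 2 ^ n * n.factorial * ‖a n‖ ^ 2) *
          Real.sqrt (Real.exp (‖w‖ ^ 2 / 2)) := by
        rw [Real.sqrt_mul (by positivity)]
        gcongr
    _ = _ := by rw [← Real.exp_half]; ring_nf

theorem norm_sub_sum_mul_pow_le_fockTail_mul_exp {w S : ℂ}
    (hS : HasSum (fun n ↦ a n * w ^ n) S)
    (ha : Summable fun n ↦ 2 ^ n * n.factorial * ‖a n‖ ^ 2) (N : ℕ) :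
    ‖S - ∑ n ∈ range N, a n * w ^ n‖ ≤ fockTail a N * Real.exp (‖w‖ ^ 2 / 4) := by
  refine le_of_tendsto' ((hasSum_nat_add_iff' N).2 hS).tendsto_sum_nat.norm fun M ↦ ?_
  have hM := norm_sum_mul_pow_le_sqrt_mul_exp a w ((range M).map (addRightEmbedding N))
  simp only [sum_map, addRightEmbedding_apply] at hM
  refine hM.trans ?_
  rw [fockTail]
  gcongr
  exact ((summable_nat_add_iff N).2 ha).sum_le_tsum _ fun _ _ ↦ by positivity

end Fock

section GaussianGrowth

theorem norm_exp_sq_div_four (w : ℂ) :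
    ‖exp (w ^ 2 / 4)‖ = Real.exp ((w.re ^ 2 - w.im ^ 2) / 4) := by
  rw [norm_exp, show (4 : ℂ) = (4 : ℝ) by norm_num, div_ofReal_re, sq, mul_re, sq, sq]

theorem norm_exp_neg_sq_div_four (w : ℂ) :
    ‖exp (-w ^ 2 / 4)‖ = Real.exp ((w.im ^ 2 - w.re ^ 2) / 4) := by
  rw [neg_div, exp_neg, norm_inv, norm_exp_sq_div_four, ← Real.exp_neg]
  ring_nf

theorem integrable_exp_neg_im_sq_mul_inv_one_add_re_sq :
    Integrable fun w : ℂ ↦ Real.exp (-w.im ^ 2 / 2) * (1 + w.re ^ 2)⁻¹ := by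
  have hprod := integrable_inv_one_add_sq.mul_prod
    (integrable_exp_neg_mul_sq (one_half_pos (α := ℝ)))
  rw [← Measure.volume_eq_prod] at hprod
  refine ((Complex.volume_preserving_equiv_real_prod.integrable_comp_emb
    Complex.measurableEquivRealProd.measurableEmbedding).2 hprod).congr (.of_forall fun w ↦ ?_)
  simp only [Function.comp_apply, Complex.measurableEquivRealProd_apply]
  ring_nf

variable {D : ℂ → ℂ} {c : ℝ}

theorem isBigO_sq_norm_mul_exp_neg_im_sq
    (hD : D =O[cocompact ℂ] fun w ↦ Real.exp (|w.im| * c) / ‖w‖) :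
    (fun w ↦ ‖D w‖ ^ 2 * Real.exp (-w.im ^ 2)) =O[cocompact ℂ]
      fun w ↦ Real.exp (-w.im ^ 2 / 2) * (1 + w.re ^ 2)⁻¹ := by
  refine ((hD.norm_left.pow 2).mul (Asymptotics.isBigO_refl _ _)).trans
    (.of_bound (2 * Real.exp (2 * c ^ 2)) ?_)
  filter_upwards [(tendsto_norm_cocompact_atTop (E := ℂ)).eventually_ge_atTop 1] with w hw
  have hre : 1 + w.re ^ 2 ≤ 2 * ‖w‖ ^ 2 := by
    linarith [one_le_pow₀ hw (n := 2), pow_le_pow_left₀ (abs_nonneg _) (abs_re_le_norm w) 2,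
      sq_abs w.re]
  have hexp : Real.exp (|w.im| * c) ^ 2 * Real.exp (-w.im ^ 2) ≤
      Real.exp (2 * c ^ 2) * Real.exp (-w.im ^ 2 / 2) := by
    rw [← Real.exp_nat_mul, ← Real.exp_add, ← Real.exp_add, Real.exp_le_exp, ← sq_abs w.im]
    push_cast
    linarith [sq_nonneg (|w.im| - 2 * c)]
  rw [Real.norm_of_nonneg (by positivity), Real.norm_of_nonneg (by positivity)]
  calc (Real.exp (|w.im| * c) / ‖w‖) ^ 2 * Real.exp (-w.im ^ 2)
      = Real.exp (|w.im| * c) ^ 2 * Real.exp (-w.im ^ 2) * (‖w‖ ^ 2)⁻¹ := by ring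
    _ ≤ Real.exp (2 * c ^ 2) * Real.exp (-w.im ^ 2 / 2) * (2 * (1 + w.re ^ 2)⁻¹) := by
        gcongr
        rw [← div_eq_mul_inv, inv_le_comm₀ (by positivity) (by positivity), inv_div]
        linarith
    _ = _ := by ring

variable {a : ℕ → ℂ}

theorem summable_two_pow_mul_factorial_mul_sq_norm_of_isBigO
    (ha : ∀ w, HasSum (fun n ↦ a n * w ^ n) (D w * exp (w ^ 2 / 4)))
    (hD : D =O[cocompact ℂ] fun w ↦ Real.exp (|w.im| * c) / ‖w‖) :
    Summable fun n ↦ 2 ^ n * n.factorial * ‖a n‖ ^ 2 := by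
  have hweight : ∀ w, ‖D w * exp (w ^ 2 / 4)‖ ^ 2 * Real.exp (-‖w‖ ^ 2 / 2) =
      ‖D w‖ ^ 2 * Real.exp (-w.im ^ 2) := fun w ↦ by
    rw [norm_mul, norm_exp_sq_div_four, mul_pow, ← Real.exp_nat_mul, mul_assoc, ← Real.exp_add,
      Complex.sq_norm w, normSq_apply]
    ring_nf
  have hcont : Continuous fun w ↦ ‖D w * exp (w ^ 2 / 4)‖ ^ 2 * Real.exp (-‖w‖ ^ 2 / 2) :=
    ((continuous_of_hasSum_mul_pow ha).norm.pow 2).mul (by fun_prop)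
  refine summable_two_pow_mul_factorial_mul_sq_norm ha
    (hcont.locallyIntegrable.integrable_of_isBigO_cocompact ?_
      (integrable_exp_neg_im_sq_mul_inv_one_add_re_sq.integrableAtFilter _))
  simpa only [hweight] using isBigO_sq_norm_mul_exp_neg_im_sq hD

theorem norm_sub_exp_mul_sum_le_fockTail_mul_exp
    (ha : ∀ w, HasSum (fun n ↦ a n * w ^ n) (D w * exp (w ^ 2 / 4)))
    (hD : D =O[cocompact ℂ] fun w ↦ Real.exp (|w.im| * c) / ‖w‖) (w : ℂ) (N : ℕ) :
    ‖D w - exp (-w ^ 2 / 4) * ∑ n ∈ range N, a n * w ^ n‖ ≤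
      fockTail a N * Real.exp (w.im ^ 2 / 2) := by
  have hcancel : exp (-w ^ 2 / 4) * exp (w ^ 2 / 4) = 1 := by
    rw [← exp_add, neg_div, neg_add_cancel, exp_zero]
  calc ‖D w - exp (-w ^ 2 / 4) * ∑ n ∈ range N, a n * w ^ n‖
      = ‖exp (-w ^ 2 / 4)‖ * ‖D w * exp (w ^ 2 / 4) - ∑ n ∈ range N, a n * w ^ n‖ := by
        rw [← norm_mul, mul_sub, mul_left_comm, hcancel, mul_one]
    _ ≤ ‖exp (-w ^ 2 / 4)‖ * (fockTail a N * Real.exp (‖w‖ ^ 2 / 4)) := by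
        gcongr
        exact norm_sub_sum_mul_pow_le_fockTail_mul_exp (ha w)
          (summable_two_pow_mul_factorial_mul_sq_norm_of_isBigO ha hD) N
    _ = fockTail a N * Real.exp (w.im ^ 2 / 2) := by
        rw [norm_exp_neg_sq_div_four, mul_left_comm, ← Real.exp_add, Complex.sq_norm, normSq_apply]
        ring_nf

end GaussianGrowth

section Truncation

variable {b Q : ℝ} {q f f' : ℝ → ℂ}

theorem IsSolutionOn.hasSum_cCoef_mul_pow {y y' : ℝ → ℂ} {s : ℂ} (hb : 0 < b)
    (hq : ∀ x ∈ Icc (-b) b, ‖q x‖ ≤ Q)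
    (hf : IsSolutionOn q f f' (Icc (-b) b)) (hf0 : f 0 = 1) (hf'0 : f' 0 = 0)
    (hfne : ∀ x ∈ Icc (-b) b, f x ≠ 0)
    (hy : IsSolutionOn (fun t ↦ q t + s ^ 2) y y' (Icc (-b) b)) (hy0 : y 0 = 1) (hy'0 : y' 0 = s)
    {x : ℝ} (hx : x ∈ Icc (-b) b) :
    HasSum (fun n ↦ Real.sqrt Real.pi * cCoef f n x * s ^ n)
      ((y x - exp (s * x)) * exp (-s ^ 2 / 4)) := by
  have hexp : HasSum (fun k : ℕ ↦ (x : ℂ) ^ k / k.factorial * s ^ k) (exp (s * x)) := by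
    rw [exp_eq_exp_ℂ]
    refine (NormedSpace.expSeries_div_hasSum_exp (s * x)).congr_fun fun k ↦ ?_
    ring
  refine _root_.hasSum_cCoef_mul_pow
    (((hf.hasSum_formalPower hb hq hf0 hf'0 hfne hy hy0 hy'0 hx).sub hexp).congr_fun fun k ↦ ?_)
  rw [sub_div, sub_mul]

/-- The Taylor coefficients in `w` of the entire function `(y x - exp (I * w * x)) * exp (w² / 4)`,
where `y` is the solution with parameter `w`. -/
def hermiteTaylorCoeff (f : ℝ → ℂ) (x : ℝ) (n : ℕ) : ℂ :=
  Real.sqrt Real.pi * cCoef f n x * I ^ n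

theorem norm_sub_truncation_le_fockTail_mul_exp (hb : 0 < b)
    (hq : ∀ x ∈ Icc (-b) b, ‖q x‖ ≤ Q)
    (hf : IsSolutionOn q f f' (Icc (-b) b)) (hf0 : f 0 = 1) (hf'0 : f' 0 = 0)
    (hfne : ∀ x ∈ Icc (-b) b, f x ≠ 0) {w : ℂ} {y y' : ℝ → ℂ}
    (hy : IsSolutionOn (fun t ↦ q t + (I * w) ^ 2) y y' (Icc (-b) b)) (hy0 : y 0 = 1)
    (hy'0 : y' 0 = I * w) {x : ℝ} (hx : x ∈ Icc (-b) b) (N : ℕ) :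
    ‖y x - exp (I * w * x) - exp (-w ^ 2 / 4) * ∑ n ∈ range N, hermiteTaylorCoeff f x n * w ^ n‖ ≤
      fockTail (hermiteTaylorCoeff f x) N * Real.exp (w.im ^ 2 / 2) := by
  choose U U' hU hU0 hU'0 hUsum using fun z : ℂ ↦
    exists_isSolutionOn_hasSum_formalPower hb.le hf hf0 hf'0 hfne (I * z)
  have hyU : y x = U w x :=
    (hf.hasSum_formalPower hb hq hf0 hf'0 hfne hy hy0 hy'0 hx).unique (hUsum w x hx)
  have hD : (fun z ↦ U z x - exp (I * z * x)) =O[cocompact ℂ]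
      fun z ↦ Real.exp (|z.im| * |x|) / ‖z‖ := by
    refine .of_bound (Q * 2 * |x|) ?_
    filter_upwards [(tendsto_norm_cocompact_atTop (E := ℂ)).eventually_ge_atTop (2 * (Q * b)),
      (tendsto_norm_cocompact_atTop (E := ℂ)).eventually_gt_atTop 0] with z hz hz0
    refine ((hU z).norm_sub_exp_le_of_le_norm hq (norm_pos_iff.1 hz0) hz (hU0 z) (hU'0 z)
      hx).trans_eq ?_
    rw [Real.norm_of_nonneg (by positivity)]
    ring
  have hsum : ∀ z, HasSum (fun n ↦ hermiteTaylorCoeff f x n * z ^ n)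
      ((U z x - exp (I * z * x)) * exp (z ^ 2 / 4)) := fun z ↦ by
    have hz := hf.hasSum_cCoef_mul_pow hb hq hf0 hf'0 hfne (hU z) (hU0 z) (hU'0 z) hx
    rw [mul_pow, I_sq, neg_one_mul, neg_neg] at hz
    simpa only [hermiteTaylorCoeff, mul_pow, mul_assoc] using hz
  rw [hyU]
  exact norm_sub_exp_mul_sum_le_fockTail_mul_exp hsum hD w N

end Truncation

theorem hermite_truncation_error_general {b Q : ℝ} (hb : 0 < b) {q f f' : ℝ → ℂ}
    (hq : ∀ x ∈ Set.Icc (-b) b, ‖q x‖ ≤ Q)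
    (hf : ∀ x ∈ Set.Icc (-b) b, HasDerivAt f (f' x) x)
    (hf' : ∀ x ∈ Set.Icc (-b) b, HasDerivAt f' (q x * f x) x)
    (hf0 : f 0 = 1) (hf'0 : f' 0 = 0) (hfne : ∀ x ∈ Set.Icc (-b) b, f x ≠ 0) :
    ∃ ε : ℕ → ℝ → ℝ,
      (∀ N : ℕ, ∀ x ∈ Set.Icc (-b) b, 0 ≤ ε N x) ∧
      (∀ x ∈ Set.Icc (-b) b, Tendsto (fun N : ℕ ↦ ε N x) atTop (𝓝 0)) ∧
      ∀ (w : ℂ) (y y' : ℝ → ℂ),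
        (∀ x ∈ Set.Icc (-b) b, HasDerivAt y (y' x) x) →
        (∀ x ∈ Set.Icc (-b) b, HasDerivAt y' (q x * y x - w ^ 2 * y x) x) →
        y 0 = 1 → y' 0 = I * w → ∀ (N : ℕ), ∀ x ∈ Set.Icc (-b) b,
          ‖y x - (exp (I * w * x) + (Real.sqrt Real.pi : ℂ) * exp (-w ^ 2 / 4) *
            ∑ n ∈ Finset.range N, cCoef f n x * (I * w) ^ n)‖ ≤
            Real.pi ^ (1 / 4 : ℝ) * Real.exp (w.im ^ 2 / 2) * ε N x := by
  have hpi : 0 < Real.pi ^ (1 / 4 : ℝ) := Real.rpow_pos_of_pos Real.pi_pos _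
  refine ⟨fun N x ↦ fockTail (hermiteTaylorCoeff f x) N / Real.pi ^ (1 / 4 : ℝ),
    fun N x _ ↦ div_nonneg (Real.sqrt_nonneg _) hpi.le,
    fun x _ ↦ by simpa using (tendsto_fockTail (hermiteTaylorCoeff f x)).div_const _,
    fun w y y' hy hy' hy0 hy'0 N x hx ↦ ?_⟩
  have hsol : IsSolutionOn (fun t ↦ q t + (I * w) ^ 2) y y' (Set.Icc (-b) b) :=
    ⟨hy, fun t ht ↦ (hy' t ht).congr_deriv (by rw [mul_pow, I_sq]; ring)⟩
  calc _ = ‖y x - exp (I * w * x) -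
        exp (-w ^ 2 / 4) * ∑ n ∈ Finset.range N, hermiteTaylorCoeff f x n * w ^ n‖ := by
        rw [sub_add_eq_sub_sub, mul_comm (Real.sqrt Real.pi : ℂ)]
        simp only [hermiteTaylorCoeff, Finset.mul_sum, mul_pow, mul_assoc]
    _ ≤ fockTail (hermiteTaylorCoeff f x) N * Real.exp (w.im ^ 2 / 2) :=
        norm_sub_truncation_le_fockTail_mul_exp hb hq ⟨hf, hf'⟩ hf0 hf'0 hfne hsol hy0 hy'0 hx N
    _ = _ := by field_simp

/-- error bound for the truncated Hermite representation, uniform in every strip. -/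
theorem hermite_truncation_error
    (b : ℝ) (hb : 0 < b) (q : ℝ → ℂ) (hq : ContinuousOn q (Set.Icc (-b) b))
    (f f' : ℝ → ℂ)
    (hf : ∀ x ∈ Set.Icc (-b) b, HasDerivAt f (f' x) x)
    (hf' : ∀ x ∈ Set.Icc (-b) b, HasDerivAt f' (q x * f x) x)
    (hf0 : f 0 = 1) (hf'0 : f' 0 = 0)
    (hfne : ∀ x ∈ Set.Icc (-b) b, f x ≠ 0) :
    ∃ ε : ℕ → ℝ → ℝ,
      (∀ N : ℕ, ∀ x ∈ Set.Icc (-b) b, 0 ≤ ε N x) ∧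
      (∀ x ∈ Set.Icc (-b) b, Tendsto (fun N : ℕ => ε N x) atTop (𝓝 0)) ∧
      ∀ (w : ℂ) (y y' : ℝ → ℂ),
        (∀ x ∈ Set.Icc (-b) b, HasDerivAt y (y' x) x) →
        (∀ x ∈ Set.Icc (-b) b, HasDerivAt y' (q x * y x - w ^ 2 * y x) x) →
        y 0 = 1 → y' 0 = Complex.I * w →
        ∀ (N : ℕ), ∀ x ∈ Set.Icc (-b) b,
          ‖y x - (fun (w : ℂ) (N : ℕ) (x : ℝ) => Complex.exp (Complex.I * w * x) +
        (Real.sqrt Real.pi : ℂ) * Complex.exp (-w ^ 2 / 4) *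
          ∑ n ∈ Finset.range N, cCoef f n x * (Complex.I * w) ^ n) w N x‖ ≤
            Real.pi ^ (1/4 : ℝ) * Real.exp (w.im ^ 2 / 2) * ε N x := by
  obtain ⟨Q, hQ⟩ := isCompact_Icc.exists_bound_of_continuousOn hq
  exact hermite_truncation_error_general hb hQ hf hf' hf0 hf'0 hfne

end
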